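/- Window formula for the reversed consecutive composition (key computation in the proof of Proposition 8.2): Let k ≥ 2, r ≥ 2, n = rk. Define the k-periodic map U on configurations by: U(v)_j = v_{j+k−1} if j ≡ 1 (mod k); and, for j ≡ ℓ (mod k) with 2 ≤ ℓ ≤ k, U(v)_j = (v_{j−1} v_{j+k−ℓ}) ∩ (v_{j+k−ℓ+1} v_{j+k−ℓ+2} ⋯ v_{j+2k−ℓ−1}) (the degree-one Grassmann–Cayley meet of the pair v_{j−1}, v_{j+k−ℓ} with the k−1 vectors v_{j+k−ℓ+1},…,v_{j+2k−ℓ−1}); equivalently, U has window notation [v_k, (v_1 v_k) ∩ (v_{k+1}⋯v_{2k−1}), (v_2 v_k) ∩ (v_{k+1}⋯v_{2k−1}), …, (v_{k−1} v_k) ∩ (v_{k+1}⋯v_{2k−1})]. Then for every index j ∈ ZMod n there exist a sign ε_j ∈ {+1, −1} and a Laurent monomial M_j in the frozen minors (both independent of v) such that for every generic configuration v, the j-th vector of (σ_1 ∘ σ_2 ∘ ⋯ ∘ σ_{k−1})(v) equals ε_j · M_j(v) · U(v)_j. -/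

import Mathlib

open scoped BigOperators

noncomputable section

/-- Determinant of the `k × k` matrix whose `b`-th column is `c b`. -/
def colDet {k : ℕ} (c : Fin k → Fin k → ℂ) : ℂ :=
  Matrix.det (Matrix.of fun a b => c b a)

/-- The frozen Plücker minor `Δ_m(v)`, on the `k` cyclically consecutive
columns starting at `m`. -/
def frozen (k n : ℕ) (v : ZMod n → Fin k → ℂ) (m : ZMod n) : ℂ :=
  colDet (fun b : Fin k => v (m + ((b : ℕ) : ZMod n)))

/-- A configuration is generic if all frozen minors are nonzero. -/
def Generic (k n : ℕ) (v : ZMod n → Fin k → ℂ) : Prop :=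
  ∀ m : ZMod n, frozen k n v m ≠ 0

/-- The Laurent monomial `∏_m Δ_m(v)^(e m)` in the frozen minors. -/
def laurent (k n : ℕ) (e : Fin n → ℤ) (v : ZMod n → Fin k → ℂ) : ℂ :=
  ∏ m : Fin n, frozen k n v ((m : ℕ) : ZMod n) ^ e m

/-- The Artin generator `σ_i` acting on configurations. -/
def artin (k n i : ℕ) (v : ZMod n → Fin k → ℂ) : ZMod n → Fin k → ℂ :=
  fun j =>
    if (ZMod.val j) % k = i % k then v (j + 1)
    else if (ZMod.val j) % k = (i + 1) % k then
      (colDet (fun b : Fin k =>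
          if (b : ℕ) = 0 then v (j - 1) else v (j + ((b : ℕ) : ZMod n)))) • v j
        - (frozen k n v j) • v (j - 1)
    else v j

/-- `artinComp k n i v = σ_i (σ_{i-1} (⋯ (σ_1 v)))`. -/
def artinComp (k n : ℕ) : ℕ → (ZMod n → Fin k → ℂ) → ZMod n → Fin k → ℂ
  | 0, v => v
  | m + 1, v => artin k n (m + 1) (artinComp k n m v)

/-- `artinCompRev k n i v = σ_1 (σ_2 (⋯ (σ_i v)))`. -/
def artinCompRev (k n : ℕ) : ℕ → (ZMod n → Fin k → ℂ) → ZMod n → Fin k → ℂ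
  | 0, v => v
  | m + 1, v => artinCompRev k n m (artin k n (m + 1) v)

/-- The degree-one Grassmann–Cayley meet
`(a_1 ⋯ a_p) ∩ (b_1 ⋯ b_q)` (intended for `p + q = k + 1`):
`Σ_{i=1}^{p} (−1)^{p−i} · det(a_1 | ⋯ | â_i | ⋯ | a_p | b_1 | ⋯ | b_q) · a_i`. -/
def gcMeet {k p q : ℕ} (a : Fin p → Fin k → ℂ) (b : Fin q → Fin k → ℂ) : Fin k → ℂ :=
  ∑ i : Fin p, ((-1 : ℂ) ^ (p - 1 - (i : ℕ)) *
    colDet (fun c : Fin k =>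
      if hc : (c : ℕ) < p - 1 then
        (if hci : (c : ℕ) < (i : ℕ) then a ⟨(c : ℕ), Nat.lt_trans hci i.isLt⟩
         else a ⟨(c : ℕ) + 1, by have := i.isLt; omega⟩)
      else if hq : (c : ℕ) - (p - 1) < q then b ⟨(c : ℕ) - (p - 1), hq⟩ else 0)) • a i



/-- The k-periodic map `U` with window notation
`[v_k, (v_1 v_k) ∩ (v_{k+1} ⋯ v_{2k−1}), …, (v_{k−1} v_k) ∩ (v_{k+1} ⋯ v_{2k−1})]`. -/
def Umap (k n : ℕ) (v : ZMod n → Fin k → ℂ) : ZMod n → Fin k → ℂ :=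
  fun j =>
    if (ZMod.val j) % k = 1 % k then v (j + ((k - 1 : ℕ) : ZMod n))
    else
      let l : ℕ := if (ZMod.val j) % k = 0 then k else (ZMod.val j) % k
      gcMeet
        (fun m : Fin 2 =>
          if (m : ℕ) = 0 then v (j - 1) else v (j + ((k - l : ℕ) : ZMod n)))
        (fun m : Fin (k - 1) =>
          v (j + ((k - l : ℕ) : ZMod n) + 1 + ((m : ℕ) : ZMod n)))

theorem colDet_eq_det {k : ℕ} (c : Fin k → Fin k → ℂ) :
    colDet c = Matrix.det (Matrix.of c) := by
  rw [colDet, ← Matrix.det_transpose]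
  rfl

/-- The determinant with first column `x` and other columns `y`. -/
def headDet {k : ℕ} (y : Fin k → Fin k → ℂ) (x : Fin k → ℂ) : ℂ :=
  colDet (fun b : Fin k => if (b : ℕ) = 0 then x else y b)

theorem headDet_linear {k : ℕ} (hk : 0 < k) (y : Fin k → Fin k → ℂ) :
    ∃ L : (Fin k → ℂ) →ₗ[ℂ] ℂ, ∀ x, L x = headDet y x := by
  refine ⟨(Matrix.detRowAlternating (R := ℂ) (n := Fin k)).toMultilinearMap.toLinearMap y ⟨0, hk⟩, ?_⟩
  intro x
  rw [headDet, colDet_eq_det]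
  have : (fun b : Fin k => if (b : ℕ) = 0 then x else y b) = Function.update y ⟨0, hk⟩ x := by
    funext b
    by_cases hb : (b : ℕ) = 0
    · have : b = ⟨0, hk⟩ := Fin.ext hb
      subst this
      simp
    · have : b ≠ ⟨0, hk⟩ := fun h => hb (by rw [h])
      simp [hb, this]
  rw [this]
  rfl

theorem colDet_eq_zero_of_functional {k : ℕ} (c : Fin k → Fin k → ℂ)
    (L : (Fin k → ℂ) →ₗ[ℂ] ℂ) (hL : L ≠ 0) (h : ∀ b, L (c b) = 0) : colDet c = 0 := by
  rw [colDet, ← Matrix.exists_vecMul_eq_zero_iff]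
  refine ⟨fun i => L (fun j => if i = j then 1 else 0), ?_, ?_⟩
  · intro h0
    apply hL
    apply LinearMap.ext
    intro x
    rw [LinearMap.pi_apply_eq_sum_univ]
    apply Finset.sum_eq_zero
    intro i _
    rw [show (L fun j => if i = j then 1 else 0) = 0 from congrFun h0 i, smul_zero]
  · funext b
    have := h b
    rw [LinearMap.pi_apply_eq_sum_univ] at this
    simp only [Matrix.vecMul, dotProduct, Matrix.of_apply, Pi.zero_apply]
    refine Eq.trans ?_ this
    apply Finset.sum_congr rfl
    intro i _
    rw [smul_eq_mul, mul_comm]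

/-- consecutive minor of a sequence -/
def seqDet {k : ℕ} (u : ℕ → Fin k → ℂ) (m : ℕ) : ℂ := colDet (fun b : Fin k => u (m + (b : ℕ)))

def seqP {k : ℕ} (u : ℕ → Fin k → ℂ) : ℕ → ℂ
  | 0 => 1
  | t + 1 => seqP u t * (seqP u t * seqDet u (k - t))

def seqM {k : ℕ} (u : ℕ → Fin k → ℂ) (l : ℕ) : ℂ := seqP u (k - l) * seqDet u l / seqDet u k

def seqD {k : ℕ} (u : ℕ → Fin k → ℂ) (x : Fin k → ℂ) : ℂ :=
  headDet (fun b : Fin k => u (k + (b : ℕ))) x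

def seqU {k : ℕ} (u : ℕ → Fin k → ℂ) (l : ℕ) : Fin k → ℂ :=
  seqD u (u (l - 1)) • u k - seqDet u k • u (l - 1)

theorem seqP_eq_prod {k : ℕ} (u : ℕ → Fin k → ℂ) (p : ℕ) :
    ∏ t ∈ Finset.range p, (seqP u t * seqDet u (k - t)) = seqP u p := by
  induction p with
  | zero => rfl
  | succ p ih => rw [Finset.prod_range_succ, ih]; rfl

theorem seqD_top {k : ℕ} (u : ℕ → Fin k → ℂ) : seqD u (u k) = seqDet u k := by
  unfold seqD headDet seqDet
  congr 1
  funext b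
  split_ifs with h
  · rw [h]; rfl
  · rfl

theorem seqD_zero {k : ℕ} (u : ℕ → Fin k → ℂ) (c : ℕ) (h1 : 1 ≤ c) (h2 : c < k) :
    seqD u (u (k + c)) = 0 := by
  unfold seqD headDet
  rw [colDet_eq_det]
  apply Matrix.det_zero_of_row_eq (i := ⟨0, by omega⟩) (j := ⟨c, h2⟩)
  · intro h
    have := congrArg Fin.val h
    simp at this
    omega
  · funext a
    have : c ≠ 0 := by omega
    simp [Matrix.of_apply, this]

/-- Evaluate the head determinant at `u k`. -/
theorem head_eval {k : ℕ} (u : ℕ → Fin k → ℂ) (i : ℕ) (hik : i < k)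
    (hd : seqDet u k ≠ 0) (y : Fin k → Fin k → ℂ)
    (hy1 : ∀ b : Fin k, 1 ≤ (b : ℕ) → i + 1 + b ≤ k →
      y b = seqM u (i + 1 + b) • seqU u (i + 1 + b))
    (hy2 : ∀ b : Fin k, k < i + 1 + b → y b = u (i + 1 + b)) :
    headDet y (u k) = seqP u (k - 1 - i) * seqDet u (i + 1) := by
  obtain ⟨p, hp⟩ : ∃ p, p = k - 1 - i := ⟨_, rfl⟩
  have hpk : p < k := by omega
  have : NeZero k := ⟨by omega⟩
  let z : Fin k → Fin k → ℂ := fun b =>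
    if (b : ℕ) = 0 then u k else if (b : ℕ) ≤ p then u (i + b) else u (i + 1 + b)
  let t : Fin k → ℂ := fun b =>
    if (b : ℕ) = 0 then 1 else if (b : ℕ) ≤ p then
      -(seqP u (p - b) * seqDet u (i + 1 + b)) else 1
  let c : Fin k → ℂ := fun b =>
    if (b : ℕ) = 0 then 0 else if (b : ℕ) ≤ p then
      seqM u (i + 1 + b) * seqD u (u (i + b)) else 0
  have h1 : headDet y (u k) = Matrix.det (Matrix.of fun b => t b • z b) := by
    rw [headDet, colDet_eq_det]
    apply Matrix.det_eq_of_forall_row_eq_smul_add_const c 0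
    · simp [c]
    · intro b a
      simp only [Matrix.of_apply, Pi.smul_apply, smul_eq_mul]
      by_cases hb : (b : ℕ) = 0
      · simp only [c, t, z, hb, if_true]
        ring
      · by_cases hbp : (b : ℕ) ≤ p
        · have e1 : i + 1 + (b : ℕ) - 1 = i + b := by omega
          have e2 : k - (i + 1 + (b : ℕ)) = p - b := by omega
          simp only [hb, if_false, c, t, z, hbp, if_true]
          rw [hy1 b (by omega) (by omega)]
          simp only [seqU, seqM, e1, e2, Pi.smul_apply, Pi.sub_apply, smul_eq_mul]
          simp
          field_simp
          ring
        · simp only [c, t, z, hb, hbp, if_false]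
          rw [hy2 b (by omega)]
          ring
  have h2 : Matrix.det (Matrix.of fun b => t b • z b) = (∏ b, t b) * Matrix.det (Matrix.of z) := by
    have := (Matrix.detRowAlternating (R := ℂ) (n := Fin k)).toMultilinearMap.map_smul_univ t z
    exact this
  have h3 : seqDet u (i + 1) = (-1) ^ p * Matrix.det (Matrix.of z) := by
    have := Matrix.det_permute (Fin.cycleRange (⟨p, hpk⟩ : Fin k)) (Matrix.of z)
    rw [Fin.sign_cycleRange] at this
    simp only [Units.val_pow_eq_pow_val, Units.val_neg, Units.val_one, Int.cast_pow, Int.cast_neg,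
      Int.cast_one] at this
    rw [← this, seqDet, colDet_eq_det]
    congr 1
    ext b a
    simp only [Matrix.of_apply, Matrix.submatrix_apply, id]
    rcases lt_trichotomy b ⟨p, hpk⟩ with h | h | h
    · have hv := Fin.coe_cycleRange_of_lt h
      have hlt : (b : ℕ) < p := h
      have hz : z (Fin.cycleRange ⟨p, hpk⟩ b) = u (i + 1 + b) := by
        simp only [z]
        rw [hv, if_neg (by omega), if_pos (by omega)]
        congr 1
        omega
      rw [hz]
    · subst h
      simp only [z, Fin.cycleRange_self]
      rw [if_pos (by simp)]
      have : i + 1 + p = k := by omega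
      rw [this]
    · rw [Fin.cycleRange_of_gt h]
      have hlt : p < (b : ℕ) := h
      simp only [z]
      rw [if_neg (by omega), if_neg (by omega)]
  have h4 : ∏ b, t b = (-1) ^ p * seqP u p := by
    let f : ℕ → ℂ := fun b => if b = 0 then 1 else if b ≤ p then
      -(seqP u (p - b) * seqDet u (i + 1 + b)) else 1
    have e1 : ∏ b, t b = ∏ b ∈ Finset.range k, f b := by
      rw [← Fin.prod_univ_eq_prod_range]
    have e2 : ∏ b ∈ Finset.range k, f b = ∏ b ∈ Finset.range (p + 1), f b := by
      symm
      apply Finset.prod_subset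
      · intro x; simp; omega
      · intro x hx1 hx2
        simp at hx1 hx2
        simp only [f]
        rw [if_neg (by omega), if_neg (by omega)]
    rw [e1, e2, Finset.prod_range_succ']
    rw [← seqP_eq_prod, ← Finset.prod_range_reflect]
    have : f 0 = 1 := by simp [f]
    rw [this, mul_one]
    have e3 : ((-1 : ℂ)) ^ p = ∏ _b ∈ Finset.range p, (-1 : ℂ) := by simp
    rw [e3, ← Finset.prod_mul_distrib]
    apply Finset.prod_congr rfl
    intro b hb
    rw [Finset.mem_range] at hb
    simp only [f]
    rw [if_neg (by omega), if_pos (by omega)]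
    rw [show p - (p - 1 - b + 1) = b by omega, show i + 1 + (p - 1 - b + 1) = k - b by omega]
    ring
  rw [h1, h2, h3, h4, hp]
  ring

theorem core {k : ℕ} (u : ℕ → Fin k → ℂ) (i : ℕ) (hik : i < k)
    (hd : seqDet u k ≠ 0) (y : Fin k → Fin k → ℂ)
    (hy1 : ∀ b : Fin k, 1 ≤ (b : ℕ) → i + 1 + b ≤ k →
      y b = seqM u (i + 1 + b) • seqU u (i + 1 + b))
    (hy2 : ∀ b : Fin k, k < i + 1 + b → y b = u (i + 1 + b)) (x : Fin k → ℂ) :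
    headDet y x = seqM u (i + 1) * seqD u x := by
  have hev := head_eval u i hik hd y hy1 hy2
  obtain ⟨L, hL⟩ := headDet_linear (by omega) y
  obtain ⟨D, hD⟩ := headDet_linear (by omega) (fun b : Fin k => u (k + (b : ℕ)))
  have hD' : ∀ x, D x = seqD u x := hD
  have hDk : D (u k) = seqDet u k := by rw [hD', seqD_top]
  have hD0 : D ≠ 0 := by
    intro h
    rw [h] at hDk
    exact hd hDk.symm
  have hDy : ∀ b : Fin k, 1 ≤ (b : ℕ) → D (y b) = 0 := by
    intro b hb
    by_cases h : i + 1 + (b : ℕ) ≤ k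
    · rw [hy1 b hb h, map_smul, seqU, map_sub, map_smul, map_smul, hDk, ← hD']
      simp only [smul_eq_mul]
      ring
    · rw [hy2 b (by omega), hD']
      obtain ⟨c, hc⟩ : ∃ c, i + 1 + (b : ℕ) = k + c := ⟨i + 1 + b - k, by omega⟩
      rw [hc]
      exact seqD_zero u c (by omega) (by omega)
  have hker : ∀ w, D w = 0 → L w = 0 := by
    intro w hw
    rw [hL, headDet]
    apply colDet_eq_zero_of_functional _ D hD0
    intro b
    by_cases hb : (b : ℕ) = 0
    · simp only [hb, if_true, hw]
    · simp only [hb, if_false]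
      exact hDy b (by omega)
  have := hker (seqDet u k • x - D x • u k) (by
    rw [map_sub, map_smul, map_smul, hDk]; simp only [smul_eq_mul]; ring)
  rw [map_sub, map_smul, map_smul, hL, hL, hev, hD', sub_eq_zero] at this
  simp only [smul_eq_mul] at this
  rw [seqM, show k - (i + 1) = k - 1 - i by omega]
  field_simp
  rw [mul_comm, this]
  ring

/-- Functions agreeing with a Laurent monomial on generic configurations. -/
def IsMono (k n : ℕ) (f : (ZMod n → Fin k → ℂ) → ℂ) : Prop :=
  ∃ e : Fin n → ℤ, ∀ v, Generic k n v → f v = laurent k n e v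

theorem IsMono.one (k n : ℕ) : IsMono k n (fun _ => 1) :=
  ⟨0, fun v _ => by simp [laurent]⟩

theorem IsMono.mul {k n : ℕ} {f g : (ZMod n → Fin k → ℂ) → ℂ} (hf : IsMono k n f)
    (hg : IsMono k n g) : IsMono k n (fun v => f v * g v) := by
  obtain ⟨e, he⟩ := hf
  obtain ⟨e', he'⟩ := hg
  refine ⟨e + e', fun v hv => ?_⟩
  simp only [he v hv, he' v hv, laurent]
  rw [← Finset.prod_mul_distrib]
  apply Finset.prod_congr rfl
  intro m _
  rw [Pi.add_apply, zpow_add₀ (hv _)]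

theorem IsMono.div {k n : ℕ} {f g : (ZMod n → Fin k → ℂ) → ℂ} (hf : IsMono k n f)
    (hg : IsMono k n g) : IsMono k n (fun v => f v / g v) := by
  obtain ⟨e, he⟩ := hf
  obtain ⟨e', he'⟩ := hg
  refine ⟨e - e', fun v hv => ?_⟩
  simp only [he v hv, he' v hv, laurent]
  rw [← Finset.prod_div_distrib]
  apply Finset.prod_congr rfl
  intro m _
  rw [Pi.sub_apply, zpow_sub₀ (hv _)]

theorem IsMono.frozen {k n : ℕ} [NeZero n] (m : ZMod n) :
    IsMono k n (fun v => frozen k n v m) := by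
  refine ⟨Pi.single ⟨m.val, ZMod.val_lt m⟩ 1, fun v hv => ?_⟩
  rw [laurent, Finset.prod_eq_single ⟨m.val, ZMod.val_lt m⟩]
  · simp
  · intro b _ hb
    simp [Pi.single_eq_of_ne hb]
  · simp

/-- the sequence read from a base point -/
def rd {k n : ℕ} (v : ZMod n → Fin k → ℂ) (base : ZMod n) : ℕ → Fin k → ℂ :=
  fun l => v (base + (l : ZMod n))

theorem seqDet_rd {k n : ℕ} (v : ZMod n → Fin k → ℂ) (base : ZMod n) (m : ℕ) :
    seqDet (rd v base) m = frozen k n v (base + (m : ZMod n)) := by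
  unfold seqDet frozen rd
  congr 1
  funext b
  push_cast
  rw [add_assoc]

theorem IsMono.seqP {k n : ℕ} [NeZero n] (base : ZMod n) (t : ℕ) :
    IsMono k n (fun v => seqP (rd v base) t) := by
  induction t with
  | zero => exact IsMono.one k n
  | succ t ih =>
    simp only [_root_.seqP, seqDet_rd]
    exact ih.mul (ih.mul (IsMono.frozen _))

theorem IsMono.seqM {k n : ℕ} [NeZero n] (base : ZMod n) (l : ℕ) :
    IsMono k n (fun v => seqM (rd v base) l) := by
  simp only [_root_.seqM, seqDet_rd]
  exact ((IsMono.seqP _ _).mul (IsMono.frozen _)).div (IsMono.frozen _)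

theorem val_mod {k n : ℕ} [NeZero n] (hkn : k ∣ n) (base : ZMod n) (hb : base.val % k = 0)
    (l : ℕ) : (base + (l : ZMod n)).val % k = l % k := by
  rw [ZMod.val_add, ZMod.val_natCast, Nat.mod_mod_of_dvd _ hkn, Nat.add_mod,
    Nat.mod_mod_of_dvd _ hkn, hb]
  simp

def WInv (k n : ℕ) (v : ZMod n → Fin k → ℂ) (s : ℕ) (w : ZMod n → Fin k → ℂ) : Prop :=
  ∀ base : ZMod n, base.val % k = 0 →
    (∀ l : ℕ, 1 ≤ l → l < s → w (base + (l : ZMod n)) = rd v base l) ∧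
    w (base + (s : ZMod n)) = rd v base k ∧
    ∀ l : ℕ, s < l → l ≤ k → w (base + (l : ZMod n)) = seqM (rd v base) l • seqU (rd v base) l

theorem inv_step {k n : ℕ} [NeZero n] (hkn : k ∣ n) (v : ZMod n → Fin k → ℂ)
    (hv : Generic k n v) (i : ℕ) (hi : 1 ≤ i) (hik : i < k) (w : ZMod n → Fin k → ℂ)
    (hw : WInv k n v (i + 1) w) : WInv k n v i (artin k n i w) := by
  intro base hb
  obtain ⟨w1, w2, w3⟩ := hw base hb
  have hb' : (base + (k : ZMod n)).val % k = 0 := by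
    rw [val_mod hkn base hb]; simp
  obtain ⟨w1', -, -⟩ := hw _ hb'
  have hmi : i % k = i := Nat.mod_eq_of_lt hik
  refine ⟨?_, ?_, ?_⟩
  · intro l hl hli
    have hml : l % k = l := Nat.mod_eq_of_lt (by omega)
    rw [artin, val_mod hkn base hb, hml, hmi, if_neg (by omega), if_neg, w1 l hl (by omega)]
    intro h
    rcases Nat.lt_or_ge (i + 1) k with h' | h'
    · rw [Nat.mod_eq_of_lt h'] at h; omega
    · have : i + 1 = k := by omega
      rw [this, Nat.mod_self] at h; omega
  · rw [artin, val_mod hkn base hb, if_pos rfl, ← w2]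
    congr 1
    push_cast
    ring
  · intro l hl hlk
    have hne : l % k ≠ i % k := by
      rw [hmi]
      rcases Nat.lt_or_ge l k with h' | h'
      · rw [Nat.mod_eq_of_lt h']; omega
      · have : l = k := by omega
        rw [this, Nat.mod_self]; omega
    rw [artin, val_mod hkn base hb, if_neg hne]
    by_cases hl1 : l = i + 1
    · subst hl1
      rw [if_pos rfl]
      have em : base + ((i + 1 : ℕ) : ZMod n) - 1 = base + (i : ZMod n) := by
        push_cast; ring
      have hd : seqDet (rd v base) k ≠ 0 := by rw [seqDet_rd]; exact hv _
      have hc := core (rd v base) i hik hd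
        (fun b : Fin k => w (base + ((i + 1 : ℕ) : ZMod n) + ((b : ℕ) : ZMod n)))
        (by
          intro b hb1 hb2
          rw [← w3 (i + 1 + b) (by omega) hb2]
          congr 1
          push_cast
          ring)
        (by
          intro b hb2
          obtain ⟨c, hc⟩ : ∃ c, i + 1 + (b : ℕ) = k + c := ⟨i + 1 + b - k, by omega⟩
          have hbl := b.isLt
          have := w1' c (by omega) (by omega)
          have e1 : base + ((i + 1 : ℕ) : ZMod n) + ((b : ℕ) : ZMod n)
              = base + (k : ZMod n) + (c : ZMod n) := by
            rw [add_assoc, ← Nat.cast_add, hc]; push_cast; ring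
          rw [hc]
          simp only [e1, this, rd]
          congr 1
          push_cast
          ring)
      have hfr : frozen k n w (base + ((i + 1 : ℕ) : ZMod n)) =
          seqM (rd v base) (i + 1) * seqD (rd v base) (rd v base k) := by
        rw [← hc, ← w2, headDet, frozen]
        congr 1
        funext b
        split_ifs with h
        · rw [h]; simp
        · rfl
      have hA := hc (rd v base i)
      have ewi : w (base + (i : ZMod n)) = rd v base i := w1 i hi (by omega)
      rw [em, ewi, w2, hfr, seqD_top]
      rw [headDet] at hA
      rw [hA, seqU, Nat.add_sub_cancel, smul_sub, smul_smul, smul_smul]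
    · rw [if_neg, w3 l (by omega) hlk]
      intro h
      rw [Nat.mod_eq_of_lt (show i + 1 < k by omega)] at h
      rcases Nat.lt_or_ge l k with h' | h'
      · rw [Nat.mod_eq_of_lt h'] at h; omega
      · have : l = k := by omega
        rw [this, Nat.mod_self] at h; omega

theorem inv_all {k n : ℕ} [NeZero n] (hkn : k ∣ n) (v : ZMod n → Fin k → ℂ)
    (hv : Generic k n v) (m : ℕ) (hm : m < k) (w : ZMod n → Fin k → ℂ)
    (hw : WInv k n v (m + 1) w) : WInv k n v 1 (artinCompRev k n m w) := by
  induction m generalizing w with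
  | zero => exact hw
  | succ m ih =>
    exact ih (by omega) _ (inv_step hkn v hv (m + 1) (by omega) hm w hw)

theorem inv_final {k n : ℕ} [NeZero n] (hk : 2 ≤ k) (hkn : k ∣ n) (v : ZMod n → Fin k → ℂ)
    (hv : Generic k n v) : WInv k n v 1 (artinCompRev k n (k - 1) v) := by
  apply inv_all hkn v hv (k - 1) (by omega)
  rw [show k - 1 + 1 = k by omega]
  intro base _
  exact ⟨fun _ _ _ => rfl, rfl, fun l h1 h2 => by omega⟩

theorem gcMeet_two {k : ℕ} (a0 a1 : Fin k → ℂ) (y : ℕ → Fin k → ℂ) :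
    gcMeet (fun m : Fin 2 => if (m : ℕ) = 0 then a0 else a1)
      (fun m : Fin (k - 1) => y (m : ℕ)) =
    headDet (fun b : Fin k => y (b - 1)) a0 • a1 - headDet (fun b : Fin k => y (b - 1)) a1 • a0 := by
  have e : ∀ x : Fin k → ℂ, headDet (fun b : Fin k => y (b - 1)) x =
      colDet (fun c : Fin k => if (c : ℕ) < 1 then x else
        if (c : ℕ) - 1 < k - 1 then y (c - 1) else 0) := by
    intro x
    unfold headDet
    congr 1
    funext c
    have := c.isLt
    by_cases h : (c : ℕ) = 0
    · simp [h]
    · rw [if_neg h, if_neg (by omega), if_pos (by omega)]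
  rw [gcMeet, Fin.sum_univ_two, e, e]
  simp
  rw [add_comm, sub_eq_add_neg]
  congr 4
  funext c
  by_cases h : (c : ℕ) = 0 <;> simp [h]

theorem Umap_ge {k n : ℕ} [NeZero n] (hkn : k ∣ n) (v : ZMod n → Fin k → ℂ)
    (base : ZMod n) (hb : base.val % k = 0) (l : ℕ) (hl : 2 ≤ l) (hlk : l ≤ k) :
    Umap k n v (base + (l : ZMod n)) = seqU (rd v base) l := by
  have hne : l % k ≠ 1 % k := by
    rw [Nat.mod_eq_of_lt (show 1 < k by omega)]
    rcases Nat.lt_or_ge l k with h' | h'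
    · rw [Nat.mod_eq_of_lt h']; omega
    · have : l = k := by omega
      rw [this, Nat.mod_self]; omega
  have hll : (if l % k = 0 then k else l % k) = l := by
    rcases Nat.lt_or_ge l k with h' | h'
    · rw [Nat.mod_eq_of_lt h', if_neg (by omega)]
    · have : l = k := by omega
      rw [this, Nat.mod_self, if_pos rfl]
  have ek : base + (l : ZMod n) + ((k - l : ℕ) : ZMod n) = base + (k : ZMod n) := by
    rw [Nat.cast_sub hlk]; ring
  have el : base + (l : ZMod n) - 1 = base + ((l - 1 : ℕ) : ZMod n) := by
    rw [Nat.cast_sub (by omega)]; push_cast; ring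
  rw [Umap, val_mod hkn base hb, if_neg hne]
  simp only [hll, ek, el]
  rw [gcMeet_two (v (base + ((l - 1 : ℕ) : ZMod n))) (v (base + (k : ZMod n)))
    (fun m => v (base + (k : ZMod n) + 1 + (m : ZMod n)))]
  have e : ∀ x, headDet (fun b : Fin k => v (base + (k : ZMod n) + 1 + ((b - 1 : ℕ) : ZMod n))) x
      = seqD (rd v base) x := by
    intro x
    unfold seqD headDet
    congr 1
    funext b
    by_cases h : (b : ℕ) = 0
    · simp [h]
    · rw [if_neg h, if_neg h]
      simp only [rd]
      rw [Nat.cast_sub (by omega)]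
      congr 1
      push_cast
      ring
  rw [e, e, seqU, ← seqD_top]
  rfl

theorem exists_base {k n : ℕ} [NeZero n] (hk : 2 ≤ k) (hkn : k ∣ n) (j : ZMod n) :
    ∃ (base : ZMod n) (l : ℕ), base.val % k = 0 ∧ 1 ≤ l ∧ l ≤ k ∧ j = base + (l : ZMod n) := by
  obtain ⟨l, hl1, hlk, hl⟩ : ∃ l, 1 ≤ l ∧ l ≤ k ∧ (j.val + (k - l)) % k = 0 := by
    by_cases h : j.val % k = 0
    · exact ⟨k, by omega, le_rfl, by simpa using h⟩
    · have hlt := Nat.mod_lt j.val (show 0 < k by omega)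
      refine ⟨j.val % k, by omega, hlt.le, ?_⟩
      apply Nat.mod_eq_zero_of_dvd
      have h1 := Nat.div_add_mod j.val k
      refine ⟨j.val / k + 1, ?_⟩
      rw [mul_add]
      omega
  refine ⟨((j.val + (k - l) + (n - k) : ℕ) : ZMod n), l, ?_, hl1, hlk, ?_⟩
  · rw [ZMod.val_natCast, Nat.mod_mod_of_dvd _ hkn]
    apply Nat.mod_eq_zero_of_dvd
    exact dvd_add (Nat.dvd_of_mod_eq_zero hl) (Nat.dvd_sub hkn dvd_rfl)
  · have hle : k ≤ n := Nat.le_of_dvd (Nat.pos_of_ne_zero (NeZero.ne n)) hkn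
    rw [← Nat.cast_add, show j.val + (k - l) + (n - k) + l = j.val + n by omega]
    simp

/-- Window formula for the reversed consecutive composition (key computation in
the proof of Proposition 8.2): `σ_1 ∘ σ_2 ∘ ⋯ ∘ σ_{k−1}` agrees componentwise
with `U`, up to signs and Laurent monomials in the frozen minors. -/
theorem reversed_consecutive_composition_window
    (k r n : ℕ) (hk : 2 ≤ k) (hr : 2 ≤ r) (hn : n = r * k) (j : ZMod n) :
    ∃ (ε : ℂ) (e : Fin n → ℤ), (ε = 1 ∨ ε = -1) ∧
      ∀ v : ZMod n → Fin k → ℂ, Generic k n v →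
        artinCompRev k n (k - 1) v j = (ε * laurent k n e v) • Umap k n v j := by
  have hkn : k ∣ n := ⟨r, by rw [hn]; exact mul_comm _ _⟩
  have : NeZero n := ⟨by rw [hn]; exact Nat.mul_ne_zero (by omega) (by omega)⟩
  obtain ⟨base, l, hb, hl1, hlk, rfl⟩ := exists_base hk hkn j
  by_cases h : l = 1
  · subst h
    refine ⟨1, 0, Or.inl rfl, fun v hv => ?_⟩
    rw [(inv_final hk hkn v hv base hb).2.1, Umap, val_mod hkn base hb, if_pos rfl]
    simp only [laurent, Pi.zero_apply, zpow_zero, Finset.prod_const_one, mul_one, one_smul, rd]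
    congr 1
    rw [Nat.cast_sub (by omega)]
    push_cast
    ring
  · obtain ⟨e, he⟩ := IsMono.seqM (k := k) base l
    refine ⟨1, e, Or.inl rfl, fun v hv => ?_⟩
    rw [(inv_final hk hkn v hv base hb).2.2 l (by omega) hlk, Umap_ge hkn v base hb l (by omega) hlk,
      one_mul, ← he v hv]


end
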